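/- arXiv:1409.4006 — 2 statements merged into one kernel-verified Lean document; each statement's English description precedes it below -/
import Mathlib

section
/- For every positive integer n and integers d₁,…,dₙ with dᵢ ≥ 1 and Σᵢ dᵢ ≥ 5, the point (c₁³/(c₁c₂), c₃/(c₁c₂)) ∈ ℝ² lies in the closed convex hull of the set {(1/16, 43/8), (1/10, 19/5), (1/8, 13/4), (1/3, 23/12), (2, 1/3)} ∪ { (2(n-4)²/(n² - 5n + 12), (n³ - 3n² + 14n - 24)/(3(n-4)(n² - 5n + 12))) : n ∈ ℕ, n ≥ 5 }. -/
/-!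
Write `A = s₁ - 4 ≥ 1`, `t = s₂`, `u = s₃`. The Chern-ratio point is `(x, y)` with `x = 2A²/P` and
`y = N/(3AP)`, where `P = A² + 2A + 4 + t` and `N = A³ + 6A² + 18A + 16 + 3(A+2)t + 2u`.

The closed hull is bounded above by the segment from `(1/16, 43/8)` to `(2, 1/3)` and below by the
chain of segments joining consecutive corners, ordered by `x`. A point with `1/16 ≤ x ≤ 2` below
the upper segment and above the edge of the chain over its own abscissa is on a vertical segment
between two points of the hull, so it suffices to prove these inequalities.

*Upper segment.* From `dᵢ ≤ s₁` one gets `u ≤ s₁ t` and `t ≤ s₁²`, which is enough.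

*Lower edges.* Write an edge as `y + σ x = c`, with `c = 1 + e` and `6σ = w + 2 + 3e`. The inequality
`c ≤ y + σ x` is linear in `t` and `u`, and weighting by `dᵢ` and using `∑ dᵢ = A + 4` turns it into
`∑ dᵢ φ(dᵢ) ≥ 0`, where
`φ(k) = (A+4)(2k² + (6-3eA)k) + wA³ - 6eA² + (6-12e)A + 16`.
So it suffices that `φ(k) ≥ 0` for all integers `k ≥ 1`. For the edge joining the points
`Q(m+4;1,…,1)` and `Q(m+5;1,…,1)`, `m ≥ 2`, one has
`φ(k) = (A-m)(A-m-1)(wA + 48/(m(m+1))) + (A+4)(k-1)(2k+8-3eA)`.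
The first term is nonnegative since `A` is an integer. If `eA ≤ 4`, so is the second for every
integer `k ≥ 1`; if `eA > 4`, then `A` exceeds `m` so much that the first term dominates the minimum
over real `k` of the second (`long_range`). The five edges with `x ≤ 4/9` are treated one by one;
for the first two, `φ` may be negative when `A = 1`, and there the partitions of `5` are used.
-/

open Finset

/-- `s_j = ∑ i, dᵢ^j`. -/
def sPow (n : ℕ) (d : Fin n → ℝ) (j : ℕ) : ℝ := ∑ i, (d i) ^ j

/-- `c₁ = 4 - s₁`. -/
def chern1 (n : ℕ) (d : Fin n → ℝ) : ℝ := 4 - sPow n d 1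

/-- `c₂ = (s₁² + s₂)/2 - 3(s₁ - 2)`. -/
noncomputable def chern2 (n : ℕ) (d : Fin n → ℝ) : ℝ :=
  (sPow n d 1 ^ 2 + sPow n d 2) / 2 - 3 * (sPow n d 1 - 2)

/-- `c₃ = -(s₁³ + 3s₁s₂ + 2s₃)/6 + (s₁² + s₂) - 3s₁ + 4`. -/
noncomputable def chern3 (n : ℕ) (d : Fin n → ℝ) : ℝ :=
  -(sPow n d 1 ^ 3 + 3 * sPow n d 1 * sPow n d 2 + 2 * sPow n d 3) / 6
    + (sPow n d 1 ^ 2 + sPow n d 2) - 3 * sPow n d 1 + 4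

/-- The corner points of the convex hull of Chern ratios: the five sporadic corners,
the points `Q(n;1,…,1)` for `n ≥ 5`, and the limit point `(2, 1/3)`. -/
def cornerSet : Set (ℝ × ℝ) :=
  {(1/16, 43/8), (1/10, 19/5), (1/8, 13/4), (1/3, 23/12), (2, 1/3)} ∪
  {p | ∃ n : ℕ, 5 ≤ n ∧
    p = (2 * ((n : ℝ) - 4) ^ 2 / ((n : ℝ) ^ 2 - 5 * (n : ℝ) + 12),
         ((n : ℝ) ^ 3 - 3 * (n : ℝ) ^ 2 + 14 * (n : ℝ) - 24) /
           (3 * ((n : ℝ) - 4) * ((n : ℝ) ^ 2 - 5 * (n : ℝ) + 12)))}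

/-- The abscissa of the corner `Q(m+4;1,…,1)`. -/
noncomputable def cornerX (m : ℝ) : ℝ := 2 * m ^ 2 / (m ^ 2 + 3 * m + 8)

/-- The ordinate of the corner `Q(m+4;1,…,1)`. -/
noncomputable def cornerY (m : ℝ) : ℝ :=
  (m ^ 3 + 9 * m ^ 2 + 38 * m + 48) / (3 * m * (m ^ 2 + 3 * m + 8))

/-- With `A = s₁ - 4`, `t = s₂`, `u = s₃`, this is the positive multiple `3AP · (y + σx - c)` of
the defect of the Chern-ratio point from the line `y + σx = c`, where `c = 1 + e` and
`6σ = w + 2 + 3e`. -/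
def edgeForm (e w A t u : ℝ) : ℝ :=
  w * A ^ 3 - 6 * e * A ^ 2 + (6 - 12 * e) * A + 16 + (6 - 3 * e * A) * t + 2 * u

/-- The weight `φ(k)` with `∑ dᵢ φ(dᵢ) = (A + 4) · edgeForm`. -/
def edgeWeight (e w A k : ℝ) : ℝ :=
  (A + 4) * (2 * k ^ 2 + (6 - 3 * e * A) * k) +
    (w * A ^ 3 - 6 * e * A ^ 2 + (6 - 12 * e) * A + 16)

/-- The coefficient `e` of the edge from `Q(m+4;1,…,1)` to `Q(m+5;1,…,1)`. -/
noncomputable def edgeE (m : ℝ) : ℝ :=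
  (14 * (m * (m + 1)) * (2 * m + 1) + 144 * (m * (m + 1)) + 48) /
    (3 * (m * (m + 1)) * (3 * (m * (m + 1)) + 8 * (2 * m + 1)))

/-- The coefficient `w` of the edge from `Q(m+4;1,…,1)` to `Q(m+5;1,…,1)`. -/
noncomputable def edgeW (m : ℝ) : ℝ :=
  (42 * (m * (m + 1)) + 384 + 144 * (2 * m + 1)) /
    ((m * (m + 1)) * (3 * (m * (m + 1)) + 8 * (2 * m + 1)))

/-! ### Geometry of the hull -/

lemma corner_mem {p : ℝ × ℝ} (h : p ∈ cornerSet) : p ∈ closure (convexHull ℝ cornerSet) :=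
  subset_closure (subset_convexHull ℝ _ h)

lemma corner_nat_mem (m : ℕ) (hm : 1 ≤ m) :
    (cornerX m, cornerY m) ∈ closure (convexHull ℝ cornerSet) := by
  apply corner_mem
  refine Or.inr ⟨m + 4, by omega, ?_⟩
  unfold cornerX cornerY
  push_cast
  ext
  · simp only
    congr 1 <;> ring
  · simp only
    congr 1 <;> ring

/-- A point below the upper segment and above a line through two points of the hull, with abscissa
between theirs, is in the hull. -/
lemma mem_hull_of_edge {x y x0 y0 x1 y1 σ c : ℝ}
    (h0 : (x0, y0) ∈ closure (convexHull ℝ cornerSet))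
    (h1 : (x1, y1) ∈ closure (convexHull ℝ cornerSet))
    (h01 : x0 < x1) (hx0 : x0 ≤ x) (hx1 : x ≤ x1)
    (e0 : y0 + σ * x0 = c) (e1 : y1 + σ * x1 = c) (hlow : c ≤ y + σ * x)
    (hup : y ≤ 43 / 8 - 242 / 93 * (x - 1 / 16)) (hx : 1 / 16 ≤ x) (hx2 : x ≤ 2) :
    (x, y) ∈ closure (convexHull ℝ cornerSet) := by
  have hK : Convex ℝ (closure (convexHull ℝ cornerSet)) := (convex_convexHull ℝ _).closure
  have hT : ((1 / 16 : ℝ), (43 / 8 : ℝ)) ∈ closure (convexHull ℝ cornerSet) :=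
    corner_mem (by simp [cornerSet])
  have hR : ((2 : ℝ), (1 / 3 : ℝ)) ∈ closure (convexHull ℝ cornerSet) :=
    corner_mem (by simp [cornerSet])
  have hL : (x, c - σ * x) ∈ closure (convexHull ℝ cornerSet) := by
    have hd : 0 < x1 - x0 := by linarith
    have := hK h0 h1 (a := (x1 - x) / (x1 - x0)) (b := (x - x0) / (x1 - x0))
      (div_nonneg (by linarith) hd.le) (div_nonneg (by linarith) hd.le)
      (by field_simp; ring)
    convert this using 1
    have hy0 : y0 = c - σ * x0 := by linarith
    have hy1 : y1 = c - σ * x1 := by linarith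
    subst hy0 hy1
    ext <;> simp <;> field_simp <;> ring
  have hU : (x, 43 / 8 - 242 / 93 * (x - 1 / 16)) ∈ closure (convexHull ℝ cornerSet) := by
    have := hK hT hR (a := (2 - x) * (16 / 31)) (b := (x - 1 / 16) * (16 / 31))
      (by linarith) (by linarith) (by ring)
    convert this using 1
    ext <;> simp <;> ring
  have hLy : c - σ * x ≤ y := by linarith
  generalize 43 / 8 - 242 / 93 * (x - 1 / 16) = U at *
  generalize c - σ * x = L at *
  rcases eq_or_lt_of_le (hLy.trans hup) with h | h
  · rwa [show y = U by linarith]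
  · have hd : 0 < U - L := by linarith
    have := hK hL hU (a := (U - y) / (U - L)) (b := (y - L) / (U - L))
      (div_nonneg (by linarith) hd.le) (div_nonneg (by linarith) hd.le)
      (by field_simp; ring)
    convert this using 1
    ext <;> simp <;> field_simp <;> ring

/-! ### Power sums -/

/-- A multiset of integers in `{1,…,5}` has power sums given by multiplicities. -/
lemma exists_mult {ι : Type*} (d : ι → ℤ) (S : Finset ι) (h : ∀ i ∈ S, 1 ≤ d i ∧ d i ≤ 5) :
    ∃ a b c f g : ℕ, ∑ i ∈ S, d i = a + 2 * b + 3 * c + 4 * f + 5 * g ∧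
      ∑ i ∈ S, d i ^ 2 = a + 4 * b + 9 * c + 16 * f + 25 * g ∧
      ∑ i ∈ S, d i ^ 3 = a + 8 * b + 27 * c + 64 * f + 125 * g := by
  classical
  induction S using Finset.induction_on with
  | empty => exact ⟨0, 0, 0, 0, 0, by simp⟩
  | insert j S hj ih =>
    obtain ⟨a, b, c, f, g, h1, h2, h3⟩ := ih fun i hi => h i (Finset.mem_insert_of_mem hi)
    obtain ⟨hl, hu⟩ := h j (Finset.mem_insert_self _ _)
    simp only [Finset.sum_insert hj, h1, h2, h3]
    generalize d j = k at hl hu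
    interval_cases k
    · exact ⟨a + 1, b, c, f, g, by push_cast; ring, by push_cast; ring, by push_cast; ring⟩
    · exact ⟨a, b + 1, c, f, g, by push_cast; ring, by push_cast; ring, by push_cast; ring⟩
    · exact ⟨a, b, c + 1, f, g, by push_cast; ring, by push_cast; ring, by push_cast; ring⟩
    · exact ⟨a, b, c, f + 1, g, by push_cast; ring, by push_cast; ring, by push_cast; ring⟩
    · exact ⟨a, b, c, f, g + 1, by push_cast; ring, by push_cast; ring, by push_cast; ring⟩

lemma le_sum_self {n : ℕ} (d : Fin n → ℤ) (hd : ∀ i, 1 ≤ d i) (i : Fin n) : d i ≤ ∑ j, d j :=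
  Finset.single_le_sum (f := d) (fun j _ => by linarith [hd j]) (Finset.mem_univ i)

lemma power_bounds {n : ℕ} (d : Fin n → ℤ) (hd : ∀ i, 1 ≤ d i) :
    ∑ i, d i ≤ ∑ i, d i ^ 2 ∧ ∑ i, d i ^ 2 ≤ (∑ i, d i) ^ 2 ∧
      ∑ i, d i ^ 3 ≤ (∑ i, d i) * ∑ i, d i ^ 2 := by
  refine ⟨Finset.sum_le_sum fun i _ => by nlinarith [hd i], ?_, ?_⟩
  · rw [sq, Finset.mul_sum]
    exact Finset.sum_le_sum fun i _ => by nlinarith [hd i, le_sum_self d hd i]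
  · rw [Finset.mul_sum]
    exact Finset.sum_le_sum fun i _ => by nlinarith [sq_nonneg (d i), le_sum_self d hd i]

/-- The two steepest edge inequalities for the partitions of `5`. -/
lemma partitions_five {n : ℕ} (d : Fin n → ℤ) (hd : ∀ i, 1 ≤ d i) (hs : ∑ i, d i = 5) :
    0 ≤ 2 * ∑ i, d i ^ 3 - 15 * ∑ i, d i ^ 2 + 125 ∧
      0 ≤ 2 * ∑ i, d i ^ 3 - 9 * ∑ i, d i ^ 2 + 47 := by
  obtain ⟨a, b, c, f, g, h1, h2, h3⟩ :=
    exists_mult d Finset.univ fun i _ => ⟨hd i, hs ▸ le_sum_self d hd i⟩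
  rw [h2, h3]
  have hg : g = 0 ∨ g = 1 := by omega
  have hf : f = 0 ∨ f = 1 := by omega
  have hc : c = 0 ∨ c = 1 := by omega
  have hb : b = 0 ∨ b = 1 ∨ b = 2 := by omega
  rcases hg with rfl | rfl <;> rcases hf with rfl | rfl <;> rcases hc with rfl | rfl <;>
    rcases hb with rfl | rfl | rfl <;> omega

lemma edgeForm_nonneg {n : ℕ} (d : Fin n → ℤ) (hd : ∀ i, 1 ≤ d i) {e w A : ℝ} (hA : 1 ≤ A)
    (hs : ∑ i, (d i : ℝ) = A + 4) (h : ∀ k : ℤ, 1 ≤ k → 0 ≤ edgeWeight e w A k) :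
    0 ≤ edgeForm e w A (∑ i, (d i : ℝ) ^ 2) (∑ i, (d i : ℝ) ^ 3) := by
  have key : (A + 4) * edgeForm e w A (∑ i, (d i : ℝ) ^ 2) (∑ i, (d i : ℝ) ^ 3)
      = ∑ i, (d i : ℝ) * edgeWeight e w A (d i) := by
    have : ∀ i, (d i : ℝ) * edgeWeight e w A (d i) =
        2 * (A + 4) * (d i : ℝ) ^ 3 + (A + 4) * (6 - 3 * e * A) * (d i : ℝ) ^ 2 +
          (w * A ^ 3 - 6 * e * A ^ 2 + (6 - 12 * e) * A + 16) * (d i : ℝ) := by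
      intro i; unfold edgeWeight; ring
    simp only [this, Finset.sum_add_distrib, ← Finset.mul_sum, hs]
    unfold edgeForm; ring
  have h2 : 0 ≤ (A + 4) * edgeForm e w A (∑ i, (d i : ℝ) ^ 2) (∑ i, (d i : ℝ) ^ 3) := by
    rw [key]
    refine Finset.sum_nonneg fun i _ => mul_nonneg ?_ (h _ (hd i))
    exact_mod_cast (by linarith [hd i] : (0 : ℤ) ≤ d i)
  exact nonneg_of_mul_nonneg_right h2 (by linarith)

/-! ### Nonnegativity of the edge weights -/

/-- The weight as a square plus its minimum over real `k`. -/
lemma edgeWeight_nonneg_of_min {e w A k : ℝ} (hA : 1 ≤ A)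
    (h : (A + 4) * (6 - 3 * e * A) ^ 2 ≤
      8 * (w * A ^ 3 - 6 * e * A ^ 2 + (6 - 12 * e) * A + 16)) :
    0 ≤ edgeWeight e w A k := by
  have : 0 ≤ (A + 4) * (4 * k + (6 - 3 * e * A)) ^ 2 := by positivity
  unfold edgeWeight
  linarith

lemma mul_pred_nonneg (a b : ℤ) (h : b ≤ a + 1) (k : ℤ) (hab : a ≤ b) :
    0 ≤ ((k : ℝ) - a) * ((k : ℝ) - b) := by
  have : 0 ≤ (k - a) * (k - b) := by
    rcases le_or_gt k a with hk | hk
    · nlinarith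
    · exact mul_nonneg (by omega) (by omega)
  exact_mod_cast this

/-- The edge from `(1/16, 43/8)` to `(1/10, 19/5)`, for `A ≥ 2` only. -/
lemma weight_edge0 {A k : ℝ} (hA : 2 ≤ A) : 0 ≤ edgeWeight 7 229 A k := by
  apply edgeWeight_nonneg_of_min (by linarith)
  obtain ⟨q, hq, rfl⟩ : ∃ q : ℝ, 0 ≤ q ∧ A = 2 + q := ⟨A - 2, by linarith, by ring⟩
  rw [← sub_nonneg]; ring_nf; positivity

/-- The edge from `(1/10, 19/5)` to `(1/8, 13/4)`, for `A ≥ 2` only. -/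
lemma weight_edge1 {A k : ℝ} (hA : 2 ≤ A) : 0 ≤ edgeWeight 5 115 A k := by
  apply edgeWeight_nonneg_of_min (by linarith)
  obtain ⟨q, hq, rfl⟩ : ∃ q : ℝ, 0 ≤ q ∧ A = 2 + q := ⟨A - 2, by linarith, by ring⟩
  rw [← sub_nonneg]; ring_nf; positivity

/-- The edge from `(1/8, 13/4)` to `(1/6, 8/3)`. -/
lemma weight_edge2 {A k : ℤ} (hA : 1 ≤ A) : 0 ≤ edgeWeight 4 70 A k := by
  rcases eq_or_lt_of_le hA with rfl | h
  · have := mul_pred_nonneg 1 2 (by norm_num) k (by norm_num)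
    unfold edgeWeight; push_cast at this ⊢; linarith
  · have h2 : (2 : ℝ) ≤ A := by exact_mod_cast h
    apply edgeWeight_nonneg_of_min (by linarith)
    obtain ⟨q, hq, h⟩ : ∃ q : ℝ, 0 ≤ q ∧ (A : ℝ) = 2 + q := ⟨A - 2, by linarith, by ring⟩
    rw [h, ← sub_nonneg]; ring_nf; positivity

/-- The edge from `(1/6, 8/3)` to `(1/3, 23/12)`. -/
lemma weight_edge3 {A k : ℤ} (hA : 1 ≤ A) (hk : 1 ≤ k) : 0 ≤ edgeWeight (29 / 12) (71 / 4) A k := by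
  rcases (by omega : A = 1 ∨ A = 2 ∨ 3 ≤ A) with rfl | rfl | h
  · have hkR : (1 : ℝ) ≤ k := by exact_mod_cast hk
    unfold edgeWeight; push_cast; nlinarith
  · have : 0 ≤ (4 * k - 9) * (k - 2) := by
      rcases le_or_gt k 2 with hk | hk
      · nlinarith
      · exact mul_nonneg (by omega) (by omega)
    have : (0 : ℝ) ≤ (4 * k - 9) * (k - 2) := by exact_mod_cast this
    unfold edgeWeight; push_cast at this ⊢; linarith
  · have h2 : (3 : ℝ) ≤ A := by exact_mod_cast h
    apply edgeWeight_nonneg_of_min (by linarith)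
    obtain ⟨q, hq, h⟩ : ∃ q : ℝ, 0 ≤ q ∧ (A : ℝ) = 3 + q := ⟨A - 3, by linarith, by ring⟩
    rw [h, ← sub_nonneg]; ring_nf; positivity

/-- The edge from `(1/3, 23/12)` to `(4/9, 14/9)`. -/
lemma weight_edge4 {A k : ℤ} (hA : 1 ≤ A) (hk : 1 ≤ k) : 0 ≤ edgeWeight 2 (23 / 2) A k := by
  rcases (by omega : A = 1 ∨ A = 2 ∨ 3 ≤ A) with rfl | rfl | h
  · have hkR : (1 : ℝ) ≤ k := by exact_mod_cast hk
    unfold edgeWeight; push_cast; nlinarith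
  · have := mul_pred_nonneg 1 2 (by norm_num) k (by norm_num)
    unfold edgeWeight; push_cast at this ⊢; linarith
  · have h2 : (3 : ℝ) ≤ A := by exact_mod_cast h
    apply edgeWeight_nonneg_of_min (by linarith)
    obtain ⟨q, hq, h⟩ : ∃ q : ℝ, 0 ≤ q ∧ (A : ℝ) = 3 + q := ⟨A - 3, by linarith, by ring⟩
    rw [h, ← sub_nonneg]; ring_nf; positivity

lemma edgeWeight_factor {m : ℝ} (hm : 0 < m) (A k : ℝ) :
    edgeWeight (edgeE m) (edgeW m) A k =
      (A - m) * (A - (m + 1)) * (edgeW m * A + 48 / (m * (m + 1))) +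
        (A + 4) * ((k - 1) * (2 * k + 8 - 3 * edgeE m * A)) := by
  unfold edgeWeight edgeE edgeW
  field_simp
  ring

/-- Cleared of denominators: the inequality
`(A+4)(3eA-10)² ≤ 8(A-m)(A-m-1)(wA + 48/(m(m+1)))` when `A ≥ 9m/7 + 1/2` and `m ≥ 3`. -/
lemma long_range_poly {m A : ℝ} (hm : 3 ≤ m) (hA : 9 / 7 * m + 1 / 2 ≤ A) :
    0 ≤ 8 * (A - m) * (A - (m + 1)) *
        ((42 * (m * (m + 1)) + 384 + 144 * (2 * m + 1)) * A +
          48 * (3 * (m * (m + 1)) + 8 * (2 * m + 1))) *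
        ((m * (m + 1)) * (3 * (m * (m + 1)) + 8 * (2 * m + 1))) -
      (A + 4) * ((14 * (m * (m + 1)) * (2 * m + 1) + 144 * (m * (m + 1)) + 48) * A -
        10 * ((m * (m + 1)) * (3 * (m * (m + 1)) + 8 * (2 * m + 1)))) ^ 2 := by
  obtain ⟨p, hp, rfl⟩ : ∃ p : ℝ, 0 ≤ p ∧ m = 3 + p := ⟨m - 3, by linarith, by ring⟩
  obtain ⟨q, hq, rfl⟩ : ∃ q : ℝ, 0 ≤ q ∧ A = 9 / 7 * (3 + p) + 1 / 2 + q :=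
    ⟨A - (9 / 7 * (3 + p) + 1 / 2), by linarith, by ring⟩
  ring_nf
  positivity

lemma long_range {m A : ℤ} (hm : 2 ≤ m) (h : 4 < edgeE m * A) :
    ((A : ℝ) + 4) * (3 * edgeE m * A - 10) ^ 2 ≤
      8 * (((A : ℝ) - m) * (A - (m + 1)) * (edgeW m * A + 48 / ((m : ℝ) * (m + 1)))) := by
  have hmR : (2 : ℝ) ≤ m := by exact_mod_cast hm
  have hm0 : (0 : ℝ) < m := by linarith
  set D : ℝ := ((m : ℝ) * (m + 1)) * (3 * ((m : ℝ) * (m + 1)) + 8 * (2 * m + 1)) with hD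
  set E : ℝ := 14 * ((m : ℝ) * (m + 1)) * (2 * m + 1) + 144 * ((m : ℝ) * (m + 1)) + 48 with hE
  have hD0 : 0 < D := by positivity
  have hE0 : 0 < E := by positivity
  have he : edgeE m = E / (3 * D) := by
    unfold edgeE; rw [hD, hE]; congr 1; ring
  have hEA : 12 * D < E * A := by
    rw [he, div_mul_eq_mul_div, lt_div_iff₀ (by positivity)] at h
    linarith
  have key : 0 ≤ 8 * ((A : ℝ) - m) * (A - (m + 1)) *
        ((42 * ((m : ℝ) * (m + 1)) + 384 + 144 * (2 * m + 1)) * A +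
          48 * (3 * ((m : ℝ) * (m + 1)) + 8 * (2 * m + 1))) * D -
      (A + 4) * (E * A - 10 * D) ^ 2 := by
    rcases eq_or_lt_of_le hm with rfl | h3
    · have hA3 : (3 : ℝ) < A := by
        rw [hD, hE] at hEA; push_cast at hEA; linarith
      have hA4 : (4 : ℝ) ≤ A := by
        have : (3 : ℤ) < A := by exact_mod_cast hA3
        exact_mod_cast this
      rw [hD, hE]
      obtain ⟨q, hq, hA⟩ : ∃ q : ℝ, 0 ≤ q ∧ (A : ℝ) = 4 + q := ⟨A - 4, by linarith, by ring⟩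
      rw [hA]; push_cast; ring_nf; positivity
    · have h3R : (3 : ℝ) ≤ m := by exact_mod_cast h3
      refine long_range_poly h3R ?_
      by_contra! hlt
      have h1 : E * A ≤ E * (9 / 7 * m + 1 / 2) := by gcongr
      have h2 : E * (9 / 7 * m + 1 / 2) ≤ 12 * D := by
        rw [hD, hE, ← sub_nonneg]
        obtain ⟨p, hp, hm⟩ : ∃ p : ℝ, 0 ≤ p ∧ (m : ℝ) = 3 + p := ⟨m - 3, by linarith, by ring⟩
        rw [hm]; ring_nf; positivity
      linarith
  have hid : 8 * (((A : ℝ) - m) * (A - (m + 1)) * (edgeW m * A + 48 / ((m : ℝ) * (m + 1)))) -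
      ((A : ℝ) + 4) * (3 * edgeE m * A - 10) ^ 2 =
      (8 * ((A : ℝ) - m) * (A - (m + 1)) *
        ((42 * ((m : ℝ) * (m + 1)) + 384 + 144 * (2 * m + 1)) * A +
          48 * (3 * ((m : ℝ) * (m + 1)) + 8 * (2 * m + 1))) * D -
      (A + 4) * (E * A - 10 * D) ^ 2) / D ^ 2 := by
    have hw : edgeW m = (42 * ((m : ℝ) * (m + 1)) + 384 + 144 * (2 * m + 1)) / D := rfl
    have h48 : 48 / ((m : ℝ) * (m + 1)) =
        48 * (3 * ((m : ℝ) * (m + 1)) + 8 * (2 * m + 1)) / D := by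
      rw [hD]; field_simp
    rw [he, hw, h48]
    clear_value D E
    field_simp
  have : 0 ≤ (8 * ((A : ℝ) - m) * (A - (m + 1)) *
        ((42 * ((m : ℝ) * (m + 1)) + 384 + 144 * (2 * m + 1)) * A +
          48 * (3 * ((m : ℝ) * (m + 1)) + 8 * (2 * m + 1))) * D -
      (A + 4) * (E * A - 10 * D) ^ 2) / D ^ 2 := div_nonneg key (by positivity)
  linarith

/-- The edge from `Q(m+4;1,…,1)` to `Q(m+5;1,…,1)`. -/
lemma weight_edge {m A k : ℤ} (hm : 2 ≤ m) (hA : 1 ≤ A) (hk : 1 ≤ k) :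
    0 ≤ edgeWeight (edgeE m) (edgeW m) A k := by
  have hmR : (2 : ℝ) ≤ m := by exact_mod_cast hm
  have hm0 : (0 : ℝ) < m := by linarith
  have hAR : (1 : ℝ) ≤ A := by exact_mod_cast hA
  have hkR : (1 : ℝ) ≤ k := by exact_mod_cast hk
  rw [edgeWeight_factor hm0]
  rcases le_or_gt (edgeE m * A) 4 with h | h
  · have h1 : 0 ≤ ((A : ℝ) - m) * (A - (m + 1)) := by
      have := mul_pred_nonneg m (m + 1) le_rfl A (by omega)
      push_cast at this; exact this
    have h2 : 0 ≤ edgeW m := by unfold edgeW; positivity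
    have h3 : 0 ≤ ((k : ℝ) - 1) * (2 * k + 8 - 3 * edgeE m * A) := by
      rcases eq_or_lt_of_le hk with rfl | hk2
      · simp
      · have : (2 : ℝ) ≤ k := by exact_mod_cast hk2
        exact mul_nonneg (by linarith) (by linarith)
    have h4 : 0 ≤ edgeW m * A + 48 / ((m : ℝ) * (m + 1)) := by positivity
    have h5 := mul_nonneg h1 h4
    have h6 := mul_nonneg (by linarith : (0 : ℝ) ≤ A + 4) h3
    linarith
  · have h1 := long_range hm h
    have h2 : 0 ≤ ((A : ℝ) + 4) * (4 * (k - 1) + (10 - 3 * edgeE m * A)) ^ 2 := by positivity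
    linarith

/-! ### Location of the Chern-ratio point -/

lemma corner_on_edge {m : ℝ} (hm : 0 < m) :
    cornerY m + (edgeW m + 2 + 3 * edgeE m) / 6 * cornerX m = 1 + edgeE m ∧
    cornerY (m + 1) + (edgeW m + 2 + 3 * edgeE m) / 6 * cornerX (m + 1) = 1 + edgeE m := by
  unfold cornerX cornerY edgeW edgeE
  have h1 : 0 < m ^ 2 + 3 * m + 8 := by positivity
  have h2 : 0 < (m + 1) ^ 2 + 3 * (m + 1) + 8 := by positivity
  constructor
  · field_simp
    ring
  · field_simp
    ring

lemma cornerX_lt {a b : ℝ} (ha : 0 < a) (hab : a < b) : cornerX a < cornerX b := by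
  unfold cornerX
  have hb : 0 < b := ha.trans hab
  rw [div_lt_div_iff₀ (by positivity) (by positivity)]
  obtain ⟨q, hq, rfl⟩ : ∃ q : ℝ, 0 < q ∧ b = a + q := ⟨b - a, by linarith, by ring⟩
  rw [← sub_pos]; ring_nf; positivity

/-- `0 ≤ edgeForm` puts the point `(2A²/P, N/(3AP))` on or above the line. -/
lemma line_le {e w A t u : ℝ} (hA : 1 ≤ A) (ht : 0 ≤ t) (h : 0 ≤ edgeForm e w A t u) :
    1 + e ≤ (A ^ 3 + 6 * A ^ 2 + 18 * A + 16 + 3 * (A + 2) * t + 2 * u) /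
        (3 * A * (A ^ 2 + 2 * A + 4 + t)) +
      (w + 2 + 3 * e) / 6 * (2 * A ^ 2 / (A ^ 2 + 2 * A + 4 + t)) := by
  have hP : 0 < A ^ 2 + 2 * A + 4 + t := by positivity
  have hA0 : 0 < A := by linarith
  have : (A ^ 3 + 6 * A ^ 2 + 18 * A + 16 + 3 * (A + 2) * t + 2 * u) /
        (3 * A * (A ^ 2 + 2 * A + 4 + t)) +
      (w + 2 + 3 * e) / 6 * (2 * A ^ 2 / (A ^ 2 + 2 * A + 4 + t)) - (1 + e) =
      edgeForm e w A t u / (3 * A * (A ^ 2 + 2 * A + 4 + t)) := by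
    unfold edgeForm
    field_simp
    ring
  have h2 : 0 ≤ edgeForm e w A t u / (3 * A * (A ^ 2 + 2 * A + 4 + t)) := by positivity
  linarith

/-- The point is below the segment from `(1/16, 43/8)` to `(2, 1/3)`. -/
lemma upper_le {A t u : ℝ} (hA : A = 1 ∨ 2 ≤ A) (ht : 0 ≤ t) (ht2 : t ≤ (A + 4) ^ 2)
    (hu : u ≤ (A + 4) * t) :
    (A ^ 3 + 6 * A ^ 2 + 18 * A + 16 + 3 * (A + 2) * t + 2 * u) /
        (3 * A * (A ^ 2 + 2 * A + 4 + t)) ≤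
      43 / 8 - 242 / 93 * (2 * A ^ 2 / (A ^ 2 + 2 * A + 4 + t) - 1 / 16) := by
  have hA0 : 0 < A := by rcases hA with h | h <;> linarith
  have hP : 0 < A ^ 2 + 2 * A + 4 + t := by positivity
  have hid : 43 / 8 - 242 / 93 * (2 * A ^ 2 / (A ^ 2 + 2 * A + 4 + t) - 1 / 16) -
      (A ^ 3 + 6 * A ^ 2 + 18 * A + 16 + 3 * (A + 2) * t + 2 * u) /
        (3 * A * (A ^ 2 + 2 * A + 4 + t)) =
      ((1030 / 31 - 6) * A ^ 2 + (2060 / 31 - 18) * A - 16 + (360 / 31 * A - 14) * t +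
        2 * ((A + 4) * t - u)) / (3 * A * (A ^ 2 + 2 * A + 4 + t)) := by
    field_simp
    ring
  have hnum : 0 ≤ (1030 / 31 - 6) * A ^ 2 + (2060 / 31 - 18) * A - 16 + (360 / 31 * A - 14) * t +
      2 * ((A + 4) * t - u) := by
    rcases hA with rfl | h
    · linarith
    · have := mul_nonneg (by linarith : 0 ≤ 360 / 31 * A - 14) ht
      nlinarith
  have := div_nonneg hnum (by positivity : 0 ≤ 3 * A * (A ^ 2 + 2 * A + 4 + t))
  linarith

/-- Every abscissa in `[4/9, x_A]` lies over an edge between two consecutive corners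
`Q(n;1,…,1)`. -/
lemma exists_edge {x : ℝ} (hx : 4 / 9 ≤ x) {A : ℕ} (hA : 0 < A) (hxA : x ≤ cornerX A) :
    ∃ m : ℕ, 2 ≤ m ∧ cornerX m ≤ x ∧ x ≤ cornerX (m + 1) := by
  classical
  have hex : ∃ k : ℕ, x ≤ cornerX ((k + 3 : ℕ) : ℝ) := by
    refine ⟨A, hxA.trans (cornerX_lt ?_ ?_).le⟩
    · exact_mod_cast hA
    · push_cast; linarith
  refine ⟨Nat.find hex + 2, by omega, ?_, ?_⟩
  · rcases Nat.eq_zero_or_pos (Nat.find hex) with h | h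
    · rw [h]; refine le_trans ?_ hx; unfold cornerX; norm_num
    · have := Nat.find_min hex (Nat.sub_lt h one_pos)
      rw [show Nat.find hex - 1 + 3 = Nat.find hex + 2 by omega] at this
      exact (not_le.1 this).le
  · have := Nat.find_spec hex
    convert this using 2
    push_cast
    ring

lemma point_mem {n : ℕ} (d : Fin n → ℤ) (hd : ∀ i, 1 ≤ d i) (A : ℕ) (hA : 1 ≤ A)
    (hs : ∑ i, d i = A + 4) (t u : ℝ) (ht : t = ∑ i, (d i : ℝ) ^ 2)
    (hu : u = ∑ i, (d i : ℝ) ^ 3) :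
    (2 * (A : ℝ) ^ 2 / ((A : ℝ) ^ 2 + 2 * A + 4 + t),
      ((A : ℝ) ^ 3 + 6 * (A : ℝ) ^ 2 + 18 * A + 16 + 3 * (A + 2) * t + 2 * u) /
        (3 * A * ((A : ℝ) ^ 2 + 2 * A + 4 + t))) ∈ closure (convexHull ℝ cornerSet) := by
  have hAR : (1 : ℝ) ≤ A := by exact_mod_cast hA
  have hAZ : (1 : ℤ) ≤ A := by exact_mod_cast hA
  have hsR : ∑ i, (d i : ℝ) = (A : ℝ) + 4 := by exact_mod_cast hs
  obtain ⟨b1, b2, b3⟩ := power_bounds d hd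
  have b1R : (A : ℝ) + 4 ≤ t := by rw [ht, ← hsR]; exact_mod_cast b1
  have b2R : t ≤ ((A : ℝ) + 4) ^ 2 := by rw [ht, ← hsR]; exact_mod_cast b2
  have b3R : u ≤ ((A : ℝ) + 4) * t := by rw [ht, hu, ← hsR]; exact_mod_cast b3
  have ht0 : 0 ≤ t := by linarith
  have hP : 0 < (A : ℝ) ^ 2 + 2 * A + 4 + t := by positivity
  have hup := upper_le (A := (A : ℝ)) (t := t) (u := u)
    (by rcases eq_or_lt_of_le hA with h | h
        · left; exact_mod_cast h.symm
        · right; exact_mod_cast h) ht0 b2R b3R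
  have hx : 1 / 16 ≤ 2 * (A : ℝ) ^ 2 / ((A : ℝ) ^ 2 + 2 * A + 4 + t) := by
    rw [le_div_iff₀ hP]; nlinarith
  have hx2 : 2 * (A : ℝ) ^ 2 / ((A : ℝ) ^ 2 + 2 * A + 4 + t) ≤ 2 := by
    rw [div_le_iff₀ hP]; nlinarith
  have hxA : 2 * (A : ℝ) ^ 2 / ((A : ℝ) ^ 2 + 2 * A + 4 + t) ≤ cornerX A := by
    unfold cornerX; gcongr 2 * (A : ℝ) ^ 2 / ?_; linarith
  have low : ∀ e w : ℝ, (∀ k : ℤ, 1 ≤ k → 0 ≤ edgeWeight e w A k) →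
      1 + e ≤ ((A : ℝ) ^ 3 + 6 * (A : ℝ) ^ 2 + 18 * A + 16 + 3 * (A + 2) * t + 2 * u) /
        (3 * A * ((A : ℝ) ^ 2 + 2 * A + 4 + t)) +
      (w + 2 + 3 * e) / 6 * (2 * (A : ℝ) ^ 2 / ((A : ℝ) ^ 2 + 2 * A + 4 + t)) := by
    intro e w h
    apply line_le hAR ht0
    rw [ht, hu]
    exact edgeForm_nonneg d hd hAR hsR h
  have five : A = 1 → 0 ≤ edgeForm 7 229 A t u ∧ 0 ≤ edgeForm 5 115 A t u := by
    rintro rfl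
    obtain ⟨p1, p2⟩ := partitions_five d hd (by rw [hs]; norm_num)
    have q1 : (0 : ℝ) ≤ 2 * u - 15 * t + 125 := by rw [ht, hu]; exact_mod_cast p1
    have q2 : (0 : ℝ) ≤ 2 * u - 9 * t + 47 := by rw [ht, hu]; exact_mod_cast p2
    unfold edgeForm
    push_cast
    constructor <;> linarith
  have low0 : 1 + 7 ≤ ((A : ℝ) ^ 3 + 6 * (A : ℝ) ^ 2 + 18 * A + 16 + 3 * (A + 2) * t + 2 * u) /
        (3 * A * ((A : ℝ) ^ 2 + 2 * A + 4 + t)) +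
      (229 + 2 + 3 * 7) / 6 * (2 * (A : ℝ) ^ 2 / ((A : ℝ) ^ 2 + 2 * A + 4 + t)) := by
    rcases eq_or_lt_of_le hA with h | h
    · exact line_le hAR ht0 (five h.symm).1
    · exact low 7 229 fun k _ => weight_edge0 (by exact_mod_cast h)
  have low1 : 1 + 5 ≤ ((A : ℝ) ^ 3 + 6 * (A : ℝ) ^ 2 + 18 * A + 16 + 3 * (A + 2) * t + 2 * u) /
        (3 * A * ((A : ℝ) ^ 2 + 2 * A + 4 + t)) +
      (115 + 2 + 3 * 5) / 6 * (2 * (A : ℝ) ^ 2 / ((A : ℝ) ^ 2 + 2 * A + 4 + t)) := by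
    rcases eq_or_lt_of_le hA with h | h
    · exact line_le hAR ht0 (five h.symm).2
    · exact low 5 115 fun k _ => weight_edge1 (by exact_mod_cast h)
  have low2 := low 4 70 fun k _ => weight_edge2 (A := (A : ℤ)) hAZ
  have low3 := low (29 / 12) (71 / 4) fun k hk => weight_edge3 (A := (A : ℤ)) hAZ hk
  have low4 := low 2 (23 / 2) fun k hk => weight_edge4 (A := (A : ℤ)) hAZ hk
  have lowm : ∀ m : ℕ, 2 ≤ m → _ := fun m hm =>
    low (edgeE m) (edgeW m) fun k hk =>
      weight_edge (m := (m : ℤ)) (A := (A : ℤ)) (by exact_mod_cast hm) hAZ hk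
  clear five low
  generalize ((A : ℝ) ^ 3 + 6 * (A : ℝ) ^ 2 + 18 * A + 16 + 3 * (A + 2) * t + 2 * u) /
        (3 * A * ((A : ℝ) ^ 2 + 2 * A + 4 + t)) = y at *
  generalize 2 * (A : ℝ) ^ 2 / ((A : ℝ) ^ 2 + 2 * A + 4 + t) = x at *
  have k0 : ((1 / 16 : ℝ), (43 / 8 : ℝ)) ∈ closure (convexHull ℝ cornerSet) :=
    corner_mem (by simp [cornerSet])
  have k1 : ((1 / 10 : ℝ), (19 / 5 : ℝ)) ∈ closure (convexHull ℝ cornerSet) :=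
    corner_mem (by simp [cornerSet])
  have k2 : ((1 / 8 : ℝ), (13 / 4 : ℝ)) ∈ closure (convexHull ℝ cornerSet) :=
    corner_mem (by simp [cornerSet])
  have k3 : ((1 / 6 : ℝ), (8 / 3 : ℝ)) ∈ closure (convexHull ℝ cornerSet) := by
    convert corner_nat_mem 1 le_rfl using 2 <;> norm_num [cornerX, cornerY]
  have k4 : ((1 / 3 : ℝ), (23 / 12 : ℝ)) ∈ closure (convexHull ℝ cornerSet) :=
    corner_mem (by simp [cornerSet])
  have k5 : ((4 / 9 : ℝ), (14 / 9 : ℝ)) ∈ closure (convexHull ℝ cornerSet) := by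
    convert corner_nat_mem 2 (by norm_num) using 2 <;> norm_num [cornerX, cornerY]
  rcases le_or_gt x (1 / 10) with g1 | g1
  · exact mem_hull_of_edge k0 k1 (by norm_num) hx g1 (by norm_num) (by norm_num) low0 hup hx hx2
  rcases le_or_gt x (1 / 8) with g2 | g2
  · exact mem_hull_of_edge k1 k2 (by norm_num) g1.le g2 (by norm_num) (by norm_num) low1 hup hx hx2
  rcases le_or_gt x (1 / 6) with g3 | g3
  · exact mem_hull_of_edge k2 k3 (by norm_num) g2.le g3 (by norm_num) (by norm_num) low2 hup hx hx2
  rcases le_or_gt x (1 / 3) with g4 | g4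
  · exact mem_hull_of_edge k3 k4 (by norm_num) g3.le g4 (by norm_num) (by norm_num) low3 hup hx hx2
  rcases le_or_gt x (4 / 9) with g5 | g5
  · exact mem_hull_of_edge k4 k5 (by norm_num) g4.le g5 (by norm_num) (by norm_num) low4 hup hx hx2
  obtain ⟨m, hm, hm0, hm1⟩ := exists_edge g5.le (by omega) hxA
  have hmR : (0 : ℝ) < m := by exact_mod_cast (by omega : 0 < m)
  have km := corner_nat_mem (m + 1) (by omega)
  push_cast at km
  obtain ⟨c0, c1⟩ := corner_on_edge hmR
  exact mem_hull_of_edge (corner_nat_mem m (by omega)) km (cornerX_lt hmR (by linarith)) hm0 hm1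
    c0 c1 (by simpa using lowm m hm) hup hx hx2

theorem chernRatio_mem_closedConvexHull_corners
    (n : ℕ) (hn : 0 < n) (d : Fin n → ℤ) (hd : ∀ i, 1 ≤ d i) (hs : 5 ≤ ∑ i, d i) :
    (chern1 n (fun i => (d i : ℝ)) ^ 3 /
        (chern1 n (fun i => (d i : ℝ)) * chern2 n (fun i => (d i : ℝ))),
     chern3 n (fun i => (d i : ℝ)) /
        (chern1 n (fun i => (d i : ℝ)) * chern2 n (fun i => (d i : ℝ)))) ∈
      closure (convexHull ℝ cornerSet) := by
  obtain ⟨A, hA⟩ : ∃ A : ℕ, (A : ℤ) = ∑ i, d i - 4 := ⟨(∑ i, d i - 4).toNat, by omega⟩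
  have hA1 : 1 ≤ A := by omega
  have hs' : ∑ i, d i = A + 4 := by omega
  have hsR : ∑ i, (d i : ℝ) = (A : ℝ) + 4 := by exact_mod_cast hs'
  have hAR : (0 : ℝ) < A := by exact_mod_cast hA1
  have hp1 : sPow n (fun i => (d i : ℝ)) 1 = A + 4 := by simp [sPow, hsR]
  have ht0 : 0 ≤ sPow n (fun i => (d i : ℝ)) 2 := Finset.sum_nonneg fun i _ => sq_nonneg _
  have h := point_mem d hd A hA1 hs' (sPow n (fun i => (d i : ℝ)) 2)
    (sPow n (fun i => (d i : ℝ)) 3) rfl rfl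
  unfold chern1 chern2 chern3
  rw [hp1]
  generalize sPow n (fun i => (d i : ℝ)) 2 = t at *
  generalize sPow n (fun i => (d i : ℝ)) 3 = u at *
  have hP : 0 < (A : ℝ) ^ 2 + 2 * A + 4 + t := by positivity
  have hc2 : (((A : ℝ) + 4) ^ 2 + t) / 2 - 3 * ((A : ℝ) + 4 - 2) =
      ((A : ℝ) ^ 2 + 2 * A + 4 + t) / 2 := by ring
  have hc1 : (4 : ℝ) - (A + 4) = -A := by ring
  rw [hc2, hc1]
  convert h using 2
  · field_simp
  · field_simp
    ring
end

section
/- For every positive integer n and integers d₁,…,dₙ with dᵢ ≥ 1 and s₁ = Σᵢ dᵢ ≥ 5, one has 1/16 ≤ 2(4 - s₁)²/(s₁² + s₂ - 6(s₁ - 2)) ≤ 2, where s₂ = Σᵢ dᵢ². Equivalently, the x-coordinate c₁³/(c₁c₂) of any Chern-ratio point of a smooth complete intersection threefold with ample canonical class lies between 1/16 and 2. -/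
/-!
Write `s` and `t` for the sum of the degrees and of their squares. Nonnegativity of the degrees gives
`0 ≤ t ≤ s ^ 2`, and the denominator equals `(s - 3) ^ 2 + t + 3 > 0`. After clearing it, the upper
bound is `4 ≤ t + 2 * s`, and the lower bound, at its worst for `t = s ^ 2` (a hypersurface), is
`0 ≤ (3 * s - 10) * (s - 5)`, with equality for `s = 5`.
-/

open Finset

theorem xCoordinate_bounds
    (n : ℕ) (hn : 0 < n) (d : Fin n → ℤ) (hd : ∀ i, 1 ≤ d i) (hs : 5 ≤ ∑ i, d i) :
    (1/16 : ℝ) ≤ 2 * (4 - ∑ i, (d i : ℝ)) ^ 2 /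
        ((∑ i, (d i : ℝ)) ^ 2 + (∑ i, (d i : ℝ) ^ 2) - 6 * ((∑ i, (d i : ℝ)) - 2)) ∧
    2 * (4 - ∑ i, (d i : ℝ)) ^ 2 /
        ((∑ i, (d i : ℝ)) ^ 2 + (∑ i, (d i : ℝ) ^ 2) - 6 * ((∑ i, (d i : ℝ)) - 2)) ≤ 2 := by
  have hs' : (5 : ℝ) ≤ ∑ i, (d i : ℝ) := by exact_mod_cast hs
  have hd' : ∀ i, (0 : ℝ) ≤ (d i : ℝ) := fun i => by exact_mod_cast zero_le_one.trans (hd i)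
  have h2 : ∑ i, (d i : ℝ) ^ 2 ≤ (∑ i, (d i : ℝ)) ^ 2 :=
    Finset.sum_sq_le_sq_sum_of_nonneg fun i _ => hd' i
  have h0 : 0 ≤ ∑ i, (d i : ℝ) ^ 2 := Finset.sum_nonneg fun i _ => sq_nonneg _
  generalize ∑ i, (d i : ℝ) = s at *
  generalize ∑ i, (d i : ℝ) ^ 2 = t at *
  have hD : 0 < s ^ 2 + t - 6 * (s - 2) := by nlinarith [sq_nonneg (s - 3)]
  constructor
  · rw [le_div_iff₀ hD]
    -- With `t ≤ s ^ 2` this reduces to `0 ≤ (3 * s - 10) * (s - 5)`.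
    nlinarith [mul_nonneg (by linarith : 0 ≤ 3 * s - 10) (sub_nonneg.2 hs')]
  · rw [div_le_iff₀ hD]
    nlinarith
end
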